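/- arXiv:1412.5896 — 3 statements merged into one kernel-verified Lean document; each statement's English description precedes it below -/
import Mathlib

section
/- (Dudley's inequality.) There exists an absolute constant C > 0 such that for every compact subset K of ℝⁿ, the Gaussian mean width satisfies ω(K) ≤ C·∫₀^∞ √(log N(K, ε)) dε, where N(K, ε) is the covering number of K at scale ε (and the integrand vanishes for ε larger than the diameter of K, where N(K, ε) = 1). -/
/-! Dudley's inequality by chaining, with constant `C = 36`.

Fix `D` larger than the diameter of `K` and minimal nets of `K` at the scales `D / 2 ^ k`, with
nearest-point maps `p k`. For `x, y ∈ K` the vector `p m x - p m y` telescopes into the increments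
`(p (k + 1) x - p (k + 1) y) - (p k x - p k y)`, starting from `0` because the net at scale `D` is a
single point. At each level the increments form a finite set of at most `N(K, ε) ^ 4` vectors of
norm at most `6 * ε`, where `ε = D / 2 ^ (k + 1)`, so the Gaussian maximal inequality
(`exists_max_majorant`) bounds the expected maximum by `18 * ε * √(log N(K, ε))`
(`exists_link_majorant`). Summing over the levels and comparing the dyadic sum with the integral of
the nonincreasing function `√(log N(K, ·))` (`dyadic_sum_le`) gives the entropy integral; the
remainder after `m` links is `O(2 ^ (-m))` (`gaussWidth_le_of_depth`), and `m → ∞`.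

Increments of differences are used rather than of single points so that one maximum per level
suffices, and every supremum is replaced by an explicit integrable majorant, so that its
measurability plays no role. The comparison with the Bochner integral requires the entropy integral
to converge, which is shown in `integrableOn_entropyRoot` by counting grid cells. -/

open MeasureTheory ProbabilityTheory

/-- The Gaussian mean width `ω(K) = E [sup_{x,y ∈ K} ⟨g, x - y⟩]` of a set
`K ⊆ ℝⁿ`, where `g` has i.i.d. standard Gaussian coordinates. -/
noncomputable def gaussWidth {n : ℕ} (K : Set (EuclideanSpace ℝ (Fin n))) : ℝ :=
  ∫ g, sSup ((fun p : EuclideanSpace ℝ (Fin n) × EuclideanSpace ℝ (Fin n) =>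
      ∑ i, g i * (p.1 i - p.2 i)) '' (K ×ˢ K))
    ∂(Measure.pi fun _ : Fin n => gaussianReal 0 1)

/-- The covering number `N(S, ε)`: the minimal cardinality of a finite set `F` such
that every point of `S` is within distance `ε` of some point of `F`. -/
noncomputable def coveringNumber {α : Type*} [PseudoMetricSpace α] (S : Set α) (ε : ℝ) : ℕ∞ :=
  sInf ((fun F : Finset α => (F.card : ℕ∞)) '' {F | S ⊆ ⋃ c ∈ F, Metric.closedBall c ε})

/-! ### Covering numbers and the entropy integral -/

lemma coveringNumber_toNat_le {α : Type*} [PseudoMetricSpace α] {S : Set α} {ε : ℝ}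
    (F : Finset α) (hF : S ⊆ ⋃ c ∈ F, Metric.closedBall c ε) :
    (coveringNumber S ε).toNat ≤ F.card := by
  have h : coveringNumber S ε ≤ (F.card : ℕ∞) := sInf_le ⟨F, hF, rfl⟩
  simpa using ENat.toNat_le_toNat h (ENat.natCast_ne_top _)

lemma exists_minimal_net {α : Type*} [PseudoMetricSpace α] {S : Set α} (hS : IsCompact S)
    {ε : ℝ} (hε : 0 < ε) :
    ∃ F : Finset α, (S ⊆ ⋃ c ∈ F, Metric.closedBall c ε) ∧
      F.card = (coveringNumber S ε).toNat := by
  obtain ⟨t, -, htf, ht⟩ := hS.finite_cover_balls hε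
  have hne : ((fun F : Finset α => (F.card : ℕ∞)) ''
      {F | S ⊆ ⋃ c ∈ F, Metric.closedBall c ε}).Nonempty := by
    refine ⟨_, htf.toFinset, ?_, rfl⟩
    refine ht.trans ?_
    simp only [Set.Finite.mem_toFinset]
    exact Set.iUnion₂_mono fun c _ => Metric.ball_subset_closedBall
  obtain ⟨F, hF, hc⟩ := csInf_mem hne
  refine ⟨F, hF, ?_⟩
  rw [coveringNumber, ← hc]
  rfl

lemma coveringNumber_toNat_anti {α : Type*} [PseudoMetricSpace α] {S : Set α}
    (hS : IsCompact S) {ε δ : ℝ} (hε : 0 < ε) (h : ε ≤ δ) :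
    (coveringNumber S δ).toNat ≤ (coveringNumber S ε).toNat := by
  obtain ⟨F, hF, hc⟩ := exists_minimal_net hS hε
  rw [← hc]
  exact coveringNumber_toNat_le F
    (hF.trans (Set.iUnion₂_mono fun c _ => Metric.closedBall_subset_closedBall h))

lemma coveringNumber_toNat_pos {α : Type*} [PseudoMetricSpace α] {S : Set α}
    (hS : IsCompact S) (hne : S.Nonempty) {ε : ℝ} (hε : 0 < ε) :
    1 ≤ (coveringNumber S ε).toNat := by
  obtain ⟨F, hF, hc⟩ := exists_minimal_net hS hε
  rw [← hc, Nat.one_le_iff_ne_zero, Finset.card_ne_zero]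
  obtain ⟨x, hx⟩ := hne
  obtain ⟨c, hcF, -⟩ := Set.mem_iUnion₂.1 (hF hx)
  exact ⟨c, hcF⟩

lemma coveringNumber_toNat_eq_one {α : Type*} [PseudoMetricSpace α] {S : Set α}
    (hS : IsCompact S) (hne : S.Nonempty) {ε : ℝ} (hε : 0 < ε) (hD : Metric.diam S ≤ ε) :
    (coveringNumber S ε).toNat = 1 := by
  refine le_antisymm ?_ (coveringNumber_toNat_pos hS hne hε)
  obtain ⟨c, hc⟩ := hne
  refine coveringNumber_toNat_le {c} fun x hx => ?_
  simpa using (Metric.dist_le_diam_of_mem hS.isBounded hx hc).trans hD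

/-- Counting the cells of a cubic grid of mesh `ε / (n + 1)`; only the polynomial growth
in `1 / ε` matters. -/
lemma coveringNumber_toNat_le_grid {n : ℕ} {K : Set (EuclideanSpace ℝ (Fin n))} {R : ℝ}
    (hR : 0 ≤ R) (hK : ∀ x ∈ K, ‖x‖ ≤ R) {ε : ℝ} (hε : 0 < ε) :
    ((coveringNumber K ε).toNat : ℝ) ≤ (2 * R * (n + 1) / ε + 3) ^ n := by
  classical
  set δ : ℝ := ε / (n + 1) with hδ
  have hn : (0 : ℝ) < n + 1 := by positivity
  have hδ0 : 0 < δ := by positivity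
  set m : ℕ := ⌈R / δ⌉₊ with hm
  let P : Finset (Fin n → ℤ) := Fintype.piFinset fun _ => Finset.Icc (-(m : ℤ)) m
  let F : Finset (EuclideanSpace ℝ (Fin n)) :=
    P.image fun z => WithLp.toLp 2 fun i => δ * (z i : ℝ)
  have hF : K ⊆ ⋃ c ∈ F, Metric.closedBall c ε := by
    intro x hx
    refine Set.mem_iUnion₂.2 ⟨WithLp.toLp 2 fun i => δ * (⌊x i / δ⌋ : ℝ), ?_, ?_⟩
    · refine Finset.mem_image.2 ⟨fun i => ⌊x i / δ⌋, ?_, rfl⟩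
      refine Fintype.mem_piFinset.2 fun i => Finset.mem_Icc.2 ?_
      have h1 : |x i| ≤ R := (PiLp.norm_apply_le x i).trans (hK x hx)
      have h2 : R / δ ≤ m := Nat.le_ceil _
      have h3 := abs_le.1 h1
      constructor
      · refine Int.le_floor.2 ?_
        have : -R / δ ≤ x i / δ := by gcongr; exact h3.1
        push_cast
        rw [neg_div] at this
        linarith
      · have : x i / δ ≤ R / δ := by gcongr; exact h3.2
        have h4 : (⌊x i / δ⌋ : ℝ) ≤ m := (Int.floor_le _).trans (this.trans h2)
        exact_mod_cast h4
    · rw [Metric.mem_closedBall, EuclideanSpace.dist_eq]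
      refine Real.sqrt_le_iff.2 ⟨hε.le, ?_⟩
      calc ∑ i, dist (x i) (δ * (⌊x i / δ⌋ : ℝ)) ^ 2 ≤ ∑ _i : Fin n, δ ^ 2 := by
            refine Finset.sum_le_sum fun i _ => ?_
            have h1 := Int.floor_le (x i / δ)
            have h2 := Int.lt_floor_add_one (x i / δ)
            rw [le_div_iff₀ hδ0] at h1
            rw [div_lt_iff₀ hδ0] at h2
            rw [Real.dist_eq, sq_abs]
            refine pow_le_pow_left₀ (by linarith) (by linarith) 2
        _ = n * δ ^ 2 := by simp
        _ ≤ (n + 1) ^ 2 * δ ^ 2 := by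
            gcongr
            nlinarith [Nat.cast_nonneg (α := ℝ) n]
        _ = ε ^ 2 := by rw [hδ]; field_simp
  have h1 : (coveringNumber K ε).toNat ≤ (2 * m + 1) ^ n := by
    refine (coveringNumber_toNat_le F hF).trans (Finset.card_image_le.trans ?_)
    simp only [P, Fintype.card_piFinset, Int.card_Icc, Finset.prod_const, Finset.card_univ,
      Fintype.card_fin]
    gcongr
    omega
  have h2 : (m : ℝ) ≤ R / δ + 1 := (Nat.ceil_lt_add_one (by positivity)).le
  have h3 : R / δ = R * (n + 1) / ε := by rw [hδ]; field_simp
  calc ((coveringNumber K ε).toNat : ℝ) ≤ ((2 * m + 1 : ℕ) : ℝ) ^ n := by exact_mod_cast h1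
    _ ≤ (2 * R * (n + 1) / ε + 3) ^ n := by
      gcongr
      push_cast
      rw [h3] at h2
      have : 2 * R * (n + 1) / ε = 2 * (R * (n + 1) / ε) := by ring
      linarith

/-- The entropy integrand `√(log N(K, ε))`. -/
noncomputable def entropyRoot {α : Type*} [PseudoMetricSpace α] (S : Set α) (ε : ℝ) : ℝ :=
  Real.sqrt (Real.log ((coveringNumber S ε).toNat))

lemma entropyRoot_nonneg {α : Type*} [PseudoMetricSpace α] (S : Set α) (ε : ℝ) :
    0 ≤ entropyRoot S ε := Real.sqrt_nonneg _

lemma entropyRoot_anti {α : Type*} [PseudoMetricSpace α] {S : Set α}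
    (hS : IsCompact S) (hne : S.Nonempty) : AntitoneOn (entropyRoot S) (Set.Ioi 0) := by
  intro ε hε δ hδ h
  have h1 := coveringNumber_toNat_pos hS hne hδ
  have h2 := coveringNumber_toNat_anti hS hε h
  unfold entropyRoot
  gcongr

/-- The entropy integral converges: the integrand vanishes beyond the diameter and is
`O(ε ^ (-1/2))` near `0`. This excludes the junk value `0` for the Bochner integral. -/
lemma integrableOn_entropyRoot {n : ℕ} {K : Set (EuclideanSpace ℝ (Fin n))}
    (hK : IsCompact K) (hne : K.Nonempty) :
    IntegrableOn (entropyRoot K) (Set.Ioi 0) := by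
  obtain ⟨R, hR0, hR⟩ := hK.isBounded.exists_pos_norm_le
  set D : ℝ := Metric.diam K + 1 with hD
  have hD0 : 0 < D := by have := Metric.diam_nonneg (s := K); linarith
  have hmeas : AEStronglyMeasurable (entropyRoot K) (volume.restrict (Set.Ioi 0)) :=
    (aemeasurable_restrict_of_antitoneOn measurableSet_Ioi
      (entropyRoot_anti hK hne)).aestronglyMeasurable
  have hfar : IntegrableOn (entropyRoot K) (Set.Ioi D) := by
    refine (integrableOn_zero (ε' := ℝ)).congr_fun (fun ε hε => ?_) measurableSet_Ioi
    have hε' : D < ε := hε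
    rw [entropyRoot, coveringNumber_toNat_eq_one hK hne (hD0.trans hε') (by linarith)]
    simp
  have hnear : IntegrableOn (entropyRoot K) (Set.Ioc 0 D) := by
    set B : ℝ := 2 * R * (n + 1) + 3 * D with hB
    have hB0 : 0 < B := by positivity
    have hfi : IntegrableOn (fun ε : ℝ => Real.sqrt (n * B) * ε ^ (-(1 / 2) : ℝ))
        (Set.Ioc 0 D) := by
      rw [← intervalIntegrable_iff_integrableOn_Ioc_of_le hD0.le]
      exact (intervalIntegral.intervalIntegrable_rpow' (by norm_num)).const_mul _
    refine Integrable.mono' hfi (hmeas.mono_set Set.Ioc_subset_Ioi_self) ?_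
    refine (ae_restrict_mem measurableSet_Ioc).mono fun ε hε => ?_
    obtain ⟨hε0, hεD⟩ := hε
    rw [Real.norm_of_nonneg (entropyRoot_nonneg _ _), Real.rpow_neg hε0.le,
      ← Real.sqrt_eq_rpow, ← div_eq_mul_inv, ← Real.sqrt_div (by positivity)]
    refine Real.sqrt_le_sqrt ?_
    have h1 := coveringNumber_toNat_le_grid hR0.le hR hε0
    have h2 : 2 * R * (n + 1) / ε + 3 ≤ B / ε := by
      rw [hB, add_div]
      gcongr
      rw [le_div_iff₀ hε0]
      linarith
    have h0 : (0 : ℝ) < (coveringNumber K ε).toNat := by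
      exact_mod_cast coveringNumber_toNat_pos hK hne hε0
    calc Real.log ((coveringNumber K ε).toNat) ≤ Real.log ((B / ε) ^ n) := by
          refine Real.log_le_log h0 (h1.trans ?_)
          gcongr
      _ = n * Real.log (B / ε) := Real.log_pow _ _
      _ ≤ n * (B / ε) := by
          gcongr
          exact Real.log_le_self (by positivity)
      _ = n * B / ε := by ring
  rw [← Set.Ioc_union_Ioi_eq_Ioi hD0.le]
  exact hnear.union hfar

/-! ### The Gaussian maximal inequality -/

/-- The standard Gaussian measure on `Fin n → ℝ`. -/
noncomputable abbrev stdGauss (n : ℕ) : Measure (Fin n → ℝ) :=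
  Measure.pi fun _ : Fin n => gaussianReal 0 1

lemma integrable_coord (n : ℕ) (i : Fin n) : Integrable (fun g => g i) (stdGauss n) := by
  have h : Integrable (fun x : ℝ => x) (gaussianReal 0 1) :=
    (memLp_id_gaussianReal 1).integrable (by simp)
  exact (measurePreserving_eval (fun _ : Fin n => gaussianReal 0 1) i).integrable_comp_of_integrable h

lemma integral_coord (n : ℕ) (i : Fin n) : ∫ g, g i ∂(stdGauss n) = 0 := by
  have h := integral_comp_eval (μ := fun _ : Fin n => gaussianReal 0 1) (i := i)
    (f := fun x : ℝ => x) aestronglyMeasurable_id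
  rw [h, integral_id_gaussianReal]

lemma integrable_exp_coord (t : ℝ) :
    Integrable (fun x => Real.exp (t * x)) (gaussianReal 0 1) := integrable_exp_mul_gaussianReal t

lemma exp_linear_eq {n : ℕ} (l : ℝ) (v : EuclideanSpace ℝ (Fin n)) (g : Fin n → ℝ) :
    Real.exp (l * ∑ i, g i * v i) = ∏ i, Real.exp ((l * v i) * g i) := by
  rw [← Real.exp_sum, Finset.mul_sum]
  congr 1
  exact Finset.sum_congr rfl fun i _ => by ring

lemma integrable_exp_linear {n : ℕ} (l : ℝ) (v : EuclideanSpace ℝ (Fin n)) :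
    Integrable (fun g => Real.exp (l * ∑ i, g i * v i)) (stdGauss n) := by
  simp_rw [exp_linear_eq]
  exact Integrable.fintype_prod (f := fun i x => Real.exp ((l * v i) * x))
    fun i => integrable_exp_coord _

lemma integral_exp_linear {n : ℕ} (l : ℝ) (v : EuclideanSpace ℝ (Fin n)) :
    ∫ g, Real.exp (l * ∑ i, g i * v i) ∂(stdGauss n) = Real.exp (l ^ 2 * ‖v‖ ^ 2 / 2) := by
  simp_rw [exp_linear_eq]
  rw [integral_fintype_prod_eq_prod (μ := fun _ => gaussianReal 0 1)
    (f := fun i x => Real.exp ((l * v i) * x))]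
  have h (t : ℝ) : ∫ x, Real.exp (t * x) ∂(gaussianReal 0 1) = Real.exp (t ^ 2 / 2) := by
    have := mgf_gaussianReal (p := gaussianReal 0 1) (X := id) (μ := 0) (v := 1) (by simp) t
    simpa [mgf] using this
  simp_rw [h]
  rw [← Real.exp_sum, EuclideanSpace.real_norm_sq_eq]
  congr 1
  rw [Finset.mul_sum, Finset.sum_div]
  exact Finset.sum_congr rfl fun i _ => by ring

/-- The maximal inequality for finitely many Gaussian variables, phrased with an integrable
majorant of the maximum so that no measurability of a supremum is needed. The majorant is a
log-sum-exp bound in which the concave `log` is replaced by its tangent line at an upper bound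
for the mean; this is Jensen's inequality without having to integrate `log`. -/
lemma exists_max_majorant {n : ℕ} (S : Finset (EuclideanSpace ℝ (Fin n))) (hS : S.Nonempty)
    {σ : ℝ} (hσ : 0 < σ) (hn : ∀ v ∈ S, ‖v‖ ≤ σ) :
    ∃ H : (Fin n → ℝ) → ℝ, Integrable H (stdGauss n) ∧
      (∀ g, ∀ v ∈ S, ∑ i, g i * v i ≤ H g) ∧
      ∫ g, H g ∂(stdGauss n) ≤ σ * Real.sqrt (2 * Real.log S.card) := by
  have hlin (v : EuclideanSpace ℝ (Fin n)) :
      Integrable (fun g => ∑ i, g i * v i) (stdGauss n) :=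
    integrable_finsetSum _ fun i _ => (integrable_coord n i).mul_const _
  rcases (Finset.one_le_card.2 hS).eq_or_lt with h1 | h1
  · obtain ⟨v, rfl⟩ := Finset.card_eq_one.1 h1.symm
    refine ⟨fun g => ∑ i, g i * v i, hlin v, by simp, ?_⟩
    rw [integral_finsetSum _ fun i _ => (integrable_coord n i).mul_const _]
    simp [integral_mul_const, integral_coord]
  · set L : ℝ := Real.log S.card with hL
    have hL0 : 0 < L := Real.log_pos (by exact_mod_cast h1)
    have hc0 : (0 : ℝ) < S.card := by exact_mod_cast (zero_lt_one.trans h1)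
    -- `l` minimises `L / l + l * σ ^ 2 / 2`.
    set l : ℝ := Real.sqrt (2 * L) / σ with hl
    have hl0 : 0 < l := by positivity
    set A : ℝ := S.card * Real.exp (l ^ 2 * σ ^ 2 / 2) with hA
    have hA0 : 0 < A := by positivity
    have hfi : Integrable (fun g => ∑ v ∈ S, Real.exp (l * ∑ i, g i * v i)) (stdGauss n) :=
      integrable_finsetSum _ fun v _ => integrable_exp_linear l v
    have hfi2 : Integrable (fun g => Real.log A - 1 +
        (∑ v ∈ S, Real.exp (l * ∑ i, g i * v i)) / A) (stdGauss n) :=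
      (integrable_const _).add (hfi.div_const A)
    refine ⟨fun g => (Real.log A - 1 +
        (∑ v ∈ S, Real.exp (l * ∑ i, g i * v i)) / A) / l, hfi2.div_const l, ?_, ?_⟩
    · intro g v hv
      rw [le_div_iff₀ hl0, mul_comm]
      set t : ℝ := l * ∑ i, g i * v i
      have h2 : Real.exp t ≤ ∑ v ∈ S, Real.exp (l * ∑ i, g i * v i) :=
        Finset.single_le_sum (f := fun v : EuclideanSpace ℝ (Fin n) =>
          Real.exp (l * ∑ i, g i * v i)) (fun _ _ => (Real.exp_pos _).le) hv
      have h3 : Real.log (Real.exp t / A) ≤ Real.exp t / A - 1 :=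
        Real.log_le_sub_one_of_pos (by positivity)
      rw [Real.log_div (Real.exp_ne_zero _) hA0.ne', Real.log_exp] at h3
      have h4 : Real.exp t / A ≤ (∑ v ∈ S, Real.exp (l * ∑ i, g i * v i)) / A := by gcongr
      linarith
    · have h5 : ∫ g, ∑ v ∈ S, Real.exp (l * ∑ i, g i * v i) ∂(stdGauss n) ≤ A := by
        rw [integral_finsetSum _ fun v _ => integrable_exp_linear l v, hA, ← nsmul_eq_mul]
        refine Finset.sum_le_card_nsmul _ _ _ fun v hv => ?_
        rw [integral_exp_linear]
        have := hn v hv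
        gcongr
      rw [integral_div, integral_add (integrable_const _) (hfi.div_const A), integral_div]
      simp only [integral_const, probReal_univ, one_smul]
      have h6 : (∫ g, ∑ v ∈ S, Real.exp (l * ∑ i, g i * v i) ∂(stdGauss n)) / A ≤ 1 :=
        (div_le_one hA0).2 h5
      have h7 : Real.log A = L + l ^ 2 * σ ^ 2 / 2 := by
        rw [hA, Real.log_mul hc0.ne' (Real.exp_ne_zero _), Real.log_exp]
      have h8 : l * σ = Real.sqrt (2 * L) := by rw [hl]; field_simp
      have h9 : Real.sqrt (2 * L) ^ 2 = 2 * L := Real.sq_sqrt (by positivity)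
      rw [div_le_iff₀ hl0]
      have h10 : σ * Real.sqrt (2 * L) * l = 2 * L := by
        rw [mul_right_comm, mul_comm σ l, h8, ← sq, h9]
      have h11 : l ^ 2 * σ ^ 2 = 2 * L := by rw [← mul_pow, h8, h9]
      rw [h10]
      linarith

/-! ### Chaining -/

/-- Comparison of the dyadic entropy sum with the entropy integral: on `[ε / 2, ε]` a
nonincreasing function is at least its value at `ε`. -/
lemma dyadic_sum_le {f : ℝ → ℝ} (hf : AntitoneOn f (Set.Ioi 0)) (hf0 : ∀ x, 0 ≤ f x)
    (hfi : IntegrableOn f (Set.Ioi 0)) {D : ℝ} (hD : 0 < D) (m : ℕ) :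
    ∑ k ∈ Finset.range m, D / 2 ^ k * f (D / 2 ^ k) ≤ 2 * ∫ x in Set.Ioi 0, f x := by
  have hfi' {a b : ℝ} (ha : 0 < a) (hb : 0 < b) : IntervalIntegrable f volume a b := by
    rw [intervalIntegrable_iff]
    exact hfi.mono_set fun x hx => (lt_min ha hb).trans hx.1
  have key : ∀ m : ℕ, ∑ k ∈ Finset.range m, D / 2 ^ k * f (D / 2 ^ k) ≤
      2 * ∫ x in (D / 2 ^ m)..D, f x := by
    intro m
    induction m with
    | zero => simp
    | succ m ih =>
      have ha : 0 < D / 2 ^ (m + 1) := by positivity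
      have hb : 0 < D / 2 ^ m := by positivity
      have hhalf : D / 2 ^ m - D / 2 ^ (m + 1) = D / 2 ^ m / 2 := by
        rw [pow_succ]; field_simp; norm_num
      have hab : D / 2 ^ (m + 1) ≤ D / 2 ^ m := by linarith
      rw [Finset.sum_range_succ,
        ← intervalIntegral.integral_add_adjacent_intervals (hfi' ha hb) (hfi' hb hD)]
      have h1 : ∫ _x in (D / 2 ^ (m + 1))..(D / 2 ^ m), f (D / 2 ^ m) ≤
          ∫ x in (D / 2 ^ (m + 1))..(D / 2 ^ m), f x := by
        refine intervalIntegral.integral_mono_on hab (by simp) (hfi' ha hb) fun x hx => ?_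
        exact hf (ha.trans_le hx.1) hb hx.2
      rw [intervalIntegral.integral_const, hhalf, smul_eq_mul] at h1
      linarith
  refine (key m).trans ?_
  have hle : D / 2 ^ m ≤ D := div_le_self hD.le (one_le_pow₀ (by norm_num))
  rw [intervalIntegral.integral_of_le hle]
  gcongr ?_ * ?_
  refine setIntegral_mono_set hfi (Filter.Eventually.of_forall hf0) ?_
  refine (show Set.Ioc (D / 2 ^ m) D ⊆ Set.Ioi 0 from fun x hx => ?_).eventuallyLE
  exact (show 0 < D / 2 ^ m by positivity).trans hx.1

/-- One link of the chain. For nets at scales `2 * ε` and `ε` with nearest-point maps `p` and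
`q`, the increments `(q x - q y) - (p x - p y)` take at most `N(K, ε) ^ 4` values, each of norm
at most `6 * ε`. -/
lemma exists_link_majorant {n : ℕ} {K : Set (EuclideanSpace ℝ (Fin n))}
    (hK : IsCompact K) (hne : K.Nonempty) {ε : ℝ} (hε : 0 < ε)
    {F G : Finset (EuclideanSpace ℝ (Fin n))}
    (hF : F.card = (coveringNumber K (2 * ε)).toNat) (hG : G.card = (coveringNumber K ε).toNat)
    {p q : EuclideanSpace ℝ (Fin n) → EuclideanSpace ℝ (Fin n)}
    (hp : ∀ x ∈ K, p x ∈ F ∧ dist x (p x) ≤ 2 * ε) (hq : ∀ x ∈ K, q x ∈ G ∧ dist x (q x) ≤ ε) :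
    ∃ H : (Fin n → ℝ) → ℝ, Integrable H (stdGauss n) ∧
      (∀ g, ∀ x ∈ K, ∀ y ∈ K, ∑ i, g i * ((q x - q y) - (p x - p y)) i ≤ H g) ∧
      ∫ g, H g ∂(stdGauss n) ≤ 18 * (ε * entropyRoot K ε) := by
  classical
  let S : Finset (EuclideanSpace ℝ (Fin n)) :=
    (((G ×ˢ G) ×ˢ (F ×ˢ F)).image fun z => (z.1.1 - z.1.2) - (z.2.1 - z.2.2)).filter
      fun v => ‖v‖ ≤ 6 * ε
  have hmem : ∀ x ∈ K, ∀ y ∈ K, (q x - q y) - (p x - p y) ∈ S := by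
    intro x hx y hy
    refine Finset.mem_filter.2 ⟨Finset.mem_image.2 ⟨((q x, q y), (p x, p y)), ?_, rfl⟩, ?_⟩
    · simp [hp x hx, hp y hy, hq x hx, hq y hy]
    · have e : (q x - q y) - (p x - p y) = ((x - p x) - (x - q x)) - ((y - p y) - (y - q y)) := by
        abel
      rw [e]
      have h1 := (hp x hx).2
      have h2 := (hp y hy).2
      have h3 := (hq x hx).2
      have h4 := (hq y hy).2
      rw [dist_eq_norm] at h1 h2 h3 h4
      have h5 := norm_sub_le (x - p x) (x - q x)
      have h6 := norm_sub_le (y - p y) (y - q y)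
      have h7 := norm_sub_le ((x - p x) - (x - q x)) ((y - p y) - (y - q y))
      linarith
  have hSne : S.Nonempty := by
    obtain ⟨x, hx⟩ := hne
    exact ⟨_, hmem x hx x hx⟩
  have hcard : S.card ≤ G.card ^ 4 := by
    have hFG : F.card ≤ G.card := by
      rw [hF, hG]
      exact coveringNumber_toNat_anti hK hε (by linarith)
    calc S.card ≤ ((G ×ˢ G) ×ˢ (F ×ˢ F)).card :=
          (Finset.card_filter_le _ _).trans Finset.card_image_le
      _ = G.card * G.card * (F.card * F.card) := by simp only [Finset.card_product]
      _ ≤ G.card * G.card * (G.card * G.card) := by gcongr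
      _ = G.card ^ 4 := by ring
  obtain ⟨H, hH, hle, hfi⟩ := exists_max_majorant S hSne (σ := 6 * ε) (by positivity)
    fun v hv => (Finset.mem_filter.1 hv).2
  refine ⟨H, hH, fun g x hx y hy => hle g _ (hmem x hx y hy), hfi.trans ?_⟩
  have hS0 : (0 : ℝ) < S.card := by exact_mod_cast hSne.card_pos
  have hG1 : (1 : ℝ) ≤ (coveringNumber K ε).toNat := by
    exact_mod_cast coveringNumber_toNat_pos hK hne hε
  have hlog : Real.log S.card ≤ 4 * Real.log ((coveringNumber K ε).toNat) := by
    rw [hG] at hcard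
    have h := Real.log_le_log hS0
      (show (S.card : ℝ) ≤ ((coveringNumber K ε).toNat : ℝ) ^ 4 by exact_mod_cast hcard)
    rw [Real.log_pow] at h
    exact_mod_cast h
  have hL0 := Real.log_nonneg hG1
  have hsqrt : Real.sqrt (2 * Real.log S.card) ≤ 3 * entropyRoot K ε := by
    refine Real.sqrt_le_iff.2 ⟨mul_nonneg (by norm_num) (entropyRoot_nonneg _ _), ?_⟩
    rw [mul_pow, entropyRoot, Real.sq_sqrt hL0]
    linarith
  calc 6 * ε * Real.sqrt (2 * Real.log S.card) ≤ 6 * ε * (3 * entropyRoot K ε) := by gcongr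
    _ = 18 * (ε * entropyRoot K ε) := by ring

/-- Dudley's bound for a chain stopped after `m` links; the last term is the trivial estimate
of the remainder at scale `D / 2 ^ m`. -/
lemma gaussWidth_le_of_depth {n : ℕ} {K : Set (EuclideanSpace ℝ (Fin n))}
    (hK : IsCompact K) (hne : K.Nonempty) {D : ℝ} (hD : 0 < D) (hdiam : Metric.diam K ≤ D)
    (m : ℕ) :
    gaussWidth K ≤ 36 * (∫ ε in Set.Ioi 0, entropyRoot K ε) +
      2 * (∫ g, ∑ i, |g i| ∂(stdGauss n)) * (D / 2 ^ m) := by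
  have hε (k : ℕ) : 0 < D / 2 ^ k := by positivity
  have hstep (k : ℕ) : D / 2 ^ k = 2 * (D / 2 ^ (k + 1)) := by
    rw [pow_succ]; field_simp
  choose F hF hFc using fun k => exists_minimal_net hK (hε k)
  have hnear : ∀ k, ∀ x, ∃ c, x ∈ K → c ∈ F k ∧ dist x c ≤ D / 2 ^ k := by
    intro k x
    by_cases hx : x ∈ K
    · obtain ⟨c, hc, hxc⟩ := Set.mem_iUnion₂.1 (hF k hx)
      exact ⟨c, fun _ => ⟨hc, hxc⟩⟩
    · exact ⟨x, fun h => absurd h hx⟩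
  choose p hp using hnear
  have hlink : ∀ k, ∃ H : (Fin n → ℝ) → ℝ, Integrable H (stdGauss n) ∧
      (∀ g, ∀ x ∈ K, ∀ y ∈ K,
        ∑ i, g i * ((p (k + 1) x - p (k + 1) y) - (p k x - p k y)) i ≤ H g) ∧
      ∫ g, H g ∂(stdGauss n) ≤ 18 * (D / 2 ^ (k + 1) * entropyRoot K (D / 2 ^ (k + 1))) := by
    intro k
    refine exists_link_majorant hK hne (hε (k + 1)) (F := F k) (G := F (k + 1)) ?_
      (hFc (k + 1)) (fun x hx => ?_) fun x hx => hp (k + 1) x hx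
    · rw [← hstep]; exact hFc k
    · rw [← hstep]; exact hp k x hx
  choose H hH hHle hHint using hlink
  -- The net at scale `D` is a single point, so the chain starts at `0`.
  have hstart : ∀ x ∈ K, ∀ y ∈ K, p 0 x - p 0 y = 0 := by
    intro x hx y hy
    have h1 : (F 0).card = 1 := by
      rw [hFc 0]
      exact coveringNumber_toNat_eq_one hK hne (hε 0) (by simpa using hdiam)
    obtain ⟨c, hc⟩ := Finset.card_eq_one.1 h1
    have hx' := (hp 0 x hx).1
    have hy' := (hp 0 y hy).1
    rw [hc, Finset.mem_singleton] at hx' hy'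
    rw [hx', hy', sub_self]
  have hchain : ∀ g : Fin n → ℝ, ∀ x ∈ K, ∀ y ∈ K, ∀ m : ℕ,
      ∑ i, g i * (p m x - p m y) i ≤ ∑ k ∈ Finset.range m, H k g := by
    intro g x hx y hy m
    induction m with
    | zero => simp [hstart x hx y hy]
    | succ m ih =>
      rw [Finset.sum_range_succ]
      refine le_trans (le_of_eq ?_) (add_le_add ih (hHle m g x hx y hy))
      rw [← Finset.sum_add_distrib]
      refine Finset.sum_congr rfl fun i _ => ?_
      simp only [PiLp.sub_apply]
      ring
  have habs : Integrable (fun g => ∑ i, |g i|) (stdGauss n) :=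
    integrable_finsetSum _ fun i _ => (integrable_coord n i).abs
  have hsum : Integrable (fun g => ∑ k ∈ Finset.range m, H k g) (stdGauss n) :=
    integrable_finsetSum _ fun k _ => hH k
  have hrem : ∀ g : Fin n → ℝ, ∀ x ∈ K, ∀ y ∈ K,
      ∑ i, g i * ((x - p m x) - (y - p m y)) i ≤ (∑ i, |g i|) * (2 * (D / 2 ^ m)) := by
    intro g x hx y hy
    rw [Finset.sum_mul]
    refine Finset.sum_le_sum fun i _ => (le_abs_self _).trans ?_
    rw [abs_mul]
    gcongr
    refine (PiLp.norm_apply_le ((x - p m x) - (y - p m y)) i).trans ?_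
    have h1 := (hp m x hx).2
    have h2 := (hp m y hy).2
    rw [dist_eq_norm] at h1 h2
    have h3 := norm_sub_le (x - p m x) (y - p m y)
    linarith
  calc gaussWidth K ≤ ∫ g, (∑ k ∈ Finset.range m, H k g) + (∑ i, |g i|) * (2 * (D / 2 ^ m))
        ∂(stdGauss n) := by
        refine integral_mono_of_nonneg (Filter.Eventually.of_forall fun g => ?_)
          (hsum.add (habs.mul_const _)) (Filter.Eventually.of_forall fun g => ?_)
        · obtain ⟨x, hx⟩ := hne
          exact Real.sSup_nonneg' ⟨0, ⟨(x, x), ⟨hx, hx⟩, by simp⟩, le_rfl⟩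
        · refine csSup_le ((hne.prod hne).image _) ?_
          rintro _ ⟨⟨x, y⟩, ⟨hx, hy⟩, rfl⟩
          refine le_trans (le_of_eq ?_) (add_le_add (hchain g x hx y hy m) (hrem g x hx y hy))
          rw [← Finset.sum_add_distrib]
          refine Finset.sum_congr rfl fun i _ => ?_
          simp only [PiLp.sub_apply]
          ring
    _ = (∑ k ∈ Finset.range m, ∫ g, H k g ∂(stdGauss n)) +
        2 * (∫ g, ∑ i, |g i| ∂(stdGauss n)) * (D / 2 ^ m) := by
        rw [integral_add hsum (habs.mul_const _), integral_finsetSum _ fun k _ => hH k,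
          integral_mul_const]
        ring
    _ ≤ 36 * (∫ ε in Set.Ioi 0, entropyRoot K ε) +
        2 * (∫ g, ∑ i, |g i| ∂(stdGauss n)) * (D / 2 ^ m) := by
        gcongr
        have h1 : ∑ k ∈ Finset.range m, ∫ g, H k g ∂(stdGauss n) ≤
            18 * ∑ k ∈ Finset.range m, D / 2 / 2 ^ k * entropyRoot K (D / 2 / 2 ^ k) := by
          rw [Finset.mul_sum]
          refine Finset.sum_le_sum fun k _ => (hHint k).trans (le_of_eq ?_)
          rw [show D / 2 / 2 ^ k = D / 2 ^ (k + 1) by rw [pow_succ]; field_simp]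
        have h2 := dyadic_sum_le (entropyRoot_anti hK hne) (entropyRoot_nonneg K)
          (integrableOn_entropyRoot hK hne) (half_pos hD) m
        linarith

/-- **Dudley's inequality**: the Gaussian mean width is bounded by the entropy integral
`ω(K) ≤ C ∫₀^∞ √(log N(K, ε)) dε`. -/
theorem dudley_inequality :
    ∃ C > (0 : ℝ), ∀ (n : ℕ) (K : Set (EuclideanSpace ℝ (Fin n))), IsCompact K →
      gaussWidth K ≤
        C * ∫ ε in Set.Ioi (0 : ℝ), Real.sqrt (Real.log ((coveringNumber K ε).toNat)) := by
  refine ⟨36, by norm_num, fun n K hK => ?_⟩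
  change gaussWidth K ≤ 36 * ∫ ε in Set.Ioi (0 : ℝ), entropyRoot K ε
  rcases K.eq_empty_or_nonempty with rfl | hne
  -- For `K = ∅` the convention `sSup ∅ = 0` makes the width `0`.
  · have h0 : gaussWidth (∅ : Set (EuclideanSpace ℝ (Fin n))) = 0 := by simp [gaussWidth]
    rw [h0]
    exact mul_nonneg (by norm_num) (integral_nonneg fun ε => entropyRoot_nonneg _ ε)
  have hD : 0 < Metric.diam K + 1 := by
    have := Metric.diam_nonneg (s := K)
    linarith
  have hlim : Filter.Tendsto (fun m : ℕ => 36 * (∫ ε in Set.Ioi 0, entropyRoot K ε) +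
      2 * (∫ g, ∑ i, |g i| ∂(stdGauss n)) * ((Metric.diam K + 1) / 2 ^ m)) Filter.atTop
      (nhds (36 * (∫ ε in Set.Ioi 0, entropyRoot K ε))) := by
    have h : Filter.Tendsto (fun m : ℕ => (Metric.diam K + 1) / 2 ^ m) Filter.atTop (nhds 0) :=
      tendsto_const_nhds.div_atTop (tendsto_pow_atTop_atTop_of_one_lt (by norm_num))
    simpa using (h.const_mul (2 * (∫ g, ∑ i, |g i| ∂(stdGauss n)))).const_add
      (36 * (∫ ε in Set.Ioi 0, entropyRoot K ε))
  exact ge_of_tendsto' hlim fun m => gaussWidth_le_of_depth hK hne hD (by linarith) m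
end

section
/- (Sudakov minoration.) There exists an absolute constant C > 0 such that for every bounded subset K of ℝⁿ, every ε > 0, and every subset S ⊆ K that is ε-separated (i.e., ‖u − v‖₂ ≥ ε for all distinct u, v ∈ S), the cardinality of S satisfies ε·√(log |S|) ≤ C·ω(K); equivalently, log |S| ≤ C²·ω(K)²/ε². -/
open MeasureTheory ProbabilityTheory

/-! ### Translates of symmetric sets under the Gaussian measure -/

/-- The standard Gaussian measure on `ℝⁿ`, carried by the plain product `Fin n → ℝ`. -/
noncomputable abbrev gaussPi (n : ℕ) : Measure (Fin n → ℝ) :=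
  Measure.pi fun _ : Fin n => gaussianReal 0 1

lemma gaussPi_eq_withDensity (n : ℕ) :
    gaussPi n = (volume : Measure (Fin n → ℝ)).withDensity
      (fun g => ENNReal.ofReal (∏ i, gaussianPDFReal 0 1 (g i))) := by
  refine Measure.pi_eq fun s hs => ?_
  rw [withDensity_apply _ (MeasurableSet.univ_pi hs), volume_pi, Measure.restrict_pi_pi,
    ← ofReal_integral_eq_lintegral_ofReal]
  · rw [integral_fintype_prod_eq_prod (𝕜 := ℝ) (fun _ => gaussianPDFReal 0 1),
      ENNReal.ofReal_prod_of_nonneg]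
    · refine Finset.prod_congr rfl fun i _ => ?_
      rw [gaussianReal_apply_eq_integral _ one_ne_zero]
    · exact fun i _ => integral_nonneg fun x => gaussianPDFReal_nonneg _ _ _
  · exact Integrable.fintype_prod (f := fun _ => gaussianPDFReal 0 1)
      fun i => (integrable_gaussianPDFReal 0 1).restrict
  · exact ae_of_all _ fun g => Finset.prod_nonneg fun i _ => gaussianPDFReal_nonneg _ _ _

/-- The density satisfies `φ(g + x) + φ(x - g) ≥ 2 φ(g) exp (-|x|² / 2)`, which is `cosh ≥ 1`. -/
lemma density_symm_bound {n : ℕ} (x g : Fin n → ℝ) :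
    2 * (Real.exp (-(∑ i, x i ^ 2) / 2) * ∏ i, gaussianPDFReal 0 1 (g i)) ≤
      ∏ i, gaussianPDFReal 0 1 (g i + x i) + ∏ i, gaussianPDFReal 0 1 (x i - g i) := by
  have key : ∀ y : Fin n → ℝ, ∏ i, gaussianPDFReal 0 1 (y i) =
      (∏ _i : Fin n, (√(2 * Real.pi * 1))⁻¹) * Real.exp (-(∑ i, y i ^ 2) / 2) := by
    intro y
    simp only [gaussianPDFReal, Finset.prod_mul_distrib, ← Real.exp_sum]
    congr 2
    rw [neg_div, Finset.sum_div, ← Finset.sum_neg_distrib]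
    refine Finset.sum_congr rfl fun i _ => ?_
    simp [neg_div]
  rw [key g, key (fun i => g i + x i), key (fun i => x i - g i)]
  set c : ℝ := ∏ _i : Fin n, (√(2 * Real.pi * 1))⁻¹
  have hc : 0 ≤ c := Finset.prod_nonneg fun i _ => by positivity
  set a := ∑ i, x i ^ 2
  set b := ∑ i, g i ^ 2
  set d := ∑ i, g i * x i
  have e1 : ∑ i, (g i + x i) ^ 2 = b + 2 * d + a := by
    simp only [a, b, d, Finset.mul_sum, ← Finset.sum_add_distrib]
    exact Finset.sum_congr rfl fun i _ => by ring
  have e2 : ∑ i, (x i - g i) ^ 2 = b - 2 * d + a := by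
    simp only [a, b, d, Finset.mul_sum, ← Finset.sum_add_distrib, ← Finset.sum_sub_distrib]
    exact Finset.sum_congr rfl fun i _ => by ring
  rw [e1, e2]
  have f1 : Real.exp (-(b + 2 * d + a) / 2) =
      Real.exp (-a / 2) * Real.exp (-b / 2) * Real.exp (-d) := by
    rw [← Real.exp_add, ← Real.exp_add]; congr 1; ring
  have f2 : Real.exp (-(b - 2 * d + a) / 2) =
      Real.exp (-a / 2) * Real.exp (-b / 2) * Real.exp d := by
    rw [← Real.exp_add, ← Real.exp_add]; congr 1; ring
  rw [f1, f2]
  have h2 : 2 ≤ Real.exp (-d) + Real.exp d := by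
    linarith [Real.add_one_le_exp d, Real.add_one_le_exp (-d)]
  have hp : 0 ≤ c * (Real.exp (-a / 2) * Real.exp (-b / 2)) := by positivity
  nlinarith [mul_le_mul_of_nonneg_left h2 hp]

/-- Translating a symmetric set `A` by `x` shrinks its Gaussian measure by a factor at most
`exp (-|x|² / 2)`: the measure of the translate is the integral over `A` of both `φ(g + x)` and
`φ(x - g)`, and these are averaged. -/
lemma gaussPi_shift {n : ℕ} {A : Set (Fin n → ℝ)} (hA : MeasurableSet A)
    (hsymm : ∀ g ∈ A, -g ∈ A) (x : Fin n → ℝ) :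
    Real.exp (-(∑ i, x i ^ 2) / 2) * (gaussPi n).real A ≤
      (gaussPi n).real {g | g - x ∈ A} := by
  have hS : MeasurableSet {g : Fin n → ℝ | g - x ∈ A} := (measurable_sub_const x) hA
  set φ : (Fin n → ℝ) → ENNReal := fun g => ENNReal.ofReal (∏ i, gaussianPDFReal 0 1 (g i)) with hφ
  have hφm : Measurable φ := by
    refine ENNReal.measurable_ofReal.comp (Finset.measurable_prod _ fun i _ => ?_)
    exact (measurable_gaussianPDFReal 0 1).comp (measurable_pi_apply i)
  have hdens : ∀ s, MeasurableSet s → gaussPi n s = ∫⁻ g, s.indicator φ g := by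
    intro s hs
    rw [gaussPi_eq_withDensity, withDensity_apply _ hs, lintegral_indicator hs]
  have h1 : gaussPi n {g | g - x ∈ A} = ∫⁻ g, A.indicator (fun g => φ (g + x)) g := by
    rw [hdens _ hS, ← lintegral_add_right_eq_self _ x]
    refine lintegral_congr fun g => ?_
    have e : g + x ∈ {g | g - x ∈ A} ↔ g ∈ A := by
      rw [Set.mem_ofPred_eq, add_sub_cancel_right]
    by_cases hg : g ∈ A
    · rw [Set.indicator_of_mem (e.2 hg), Set.indicator_of_mem hg]
    · rw [Set.indicator_of_notMem (mt e.1 hg), Set.indicator_of_notMem hg]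
  have h2 : gaussPi n {g | g - x ∈ A} = ∫⁻ g, A.indicator (fun g => φ (x - g)) g := by
    rw [hdens _ hS, ← lintegral_sub_left_eq_self _ x]
    refine lintegral_congr fun g => ?_
    have e : x - g ∈ {g | g - x ∈ A} ↔ g ∈ A := by
      rw [Set.mem_ofPred_eq, sub_sub_cancel_left]
      exact ⟨fun h => by simpa using hsymm _ h, hsymm g⟩
    by_cases hg : g ∈ A
    · rw [Set.indicator_of_mem (e.2 hg), Set.indicator_of_mem hg]
    · rw [Set.indicator_of_notMem (mt e.1 hg), Set.indicator_of_notMem hg]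
  have hmain : 2 * (ENNReal.ofReal (Real.exp (-(∑ i, x i ^ 2) / 2)) * gaussPi n A) ≤
      2 * gaussPi n {g | g - x ∈ A} := by
    calc _ = ∫⁻ g, 2 * (ENNReal.ofReal (Real.exp (-(∑ i, x i ^ 2) / 2)) * A.indicator φ g) := by
          rw [lintegral_const_mul _ ((hφm.indicator hA).const_mul _),
            lintegral_const_mul _ (hφm.indicator hA), hdens A hA]
      _ ≤ ∫⁻ g, (A.indicator (fun g => φ (g + x)) g + A.indicator (fun g => φ (x - g)) g) := by
          refine lintegral_mono fun g => ?_
          by_cases hg : g ∈ A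
          · simp only [Set.indicator_of_mem hg, hφ]
            rw [← ENNReal.ofReal_mul (Real.exp_pos _).le, ← ENNReal.ofReal_add,
              show (2 : ENNReal) = ENNReal.ofReal 2 by simp, ← ENNReal.ofReal_mul (by norm_num)]
            · exact ENNReal.ofReal_le_ofReal (density_symm_bound x g)
            · exact Finset.prod_nonneg fun i _ => gaussianPDFReal_nonneg _ _ _
            · exact Finset.prod_nonneg fun i _ => gaussianPDFReal_nonneg _ _ _
          · simp [hg]
      _ = 2 * gaussPi n {g | g - x ∈ A} := by
          rw [lintegral_add_left, ← h1, ← h2, two_mul]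
          exact (hφm.comp (measurable_add_const x)).indicator hA
  have h3 := (ENNReal.mul_le_mul_iff_right (by norm_num) (by norm_num)).1 hmain
  have h4 := ENNReal.toReal_mono (measure_ne_top _ _) h3
  rwa [ENNReal.toReal_mul, ENNReal.toReal_ofReal (Real.exp_pos _).le] at h4

/-! ### The functional `sup_{x, y ∈ K} ⟨g, x - y⟩` -/

/-- The integrand `sup_{x, y ∈ K} ⟨g, x - y⟩` of the Gaussian width. -/
noncomputable def widthSup {n : ℕ} (K : Set (EuclideanSpace ℝ (Fin n))) (g : Fin n → ℝ) : ℝ :=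
  sSup ((fun p : EuclideanSpace ℝ (Fin n) × EuclideanSpace ℝ (Fin n) =>
      ∑ i, g i * (p.1 i - p.2 i)) '' (K ×ˢ K))

section widthSup

variable {n : ℕ} {K : Set (EuclideanSpace ℝ (Fin n))}

lemma exists_coord_bound (hK : Bornology.IsBounded K) :
    ∃ D : ℝ, 0 ≤ D ∧ ∀ p ∈ K, ∀ q ∈ K, ∀ g : Fin n → ℝ,
      ∑ i, g i * (p i - q i) ≤ D * ∑ i, |g i| := by
  obtain ⟨D, hD⟩ := Metric.isBounded_iff.1 hK
  refine ⟨|D|, abs_nonneg _, fun p hp q hq g => ?_⟩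
  rw [Finset.mul_sum]
  refine Finset.sum_le_sum fun i _ => ?_
  have h1 : |p i - q i| ≤ |D| := by
    have := PiLp.norm_apply_le (p - q) i
    rw [← dist_eq_norm] at this
    exact (this.trans (hD hp hq)).trans (le_abs_self D)
  calc g i * (p i - q i) ≤ |g i| * |p i - q i| := by rw [← abs_mul]; exact le_abs_self _
    _ ≤ |g i| * |D| := by gcongr
    _ = _ := mul_comm _ _

lemma le_widthSup (hK : Bornology.IsBounded K) {p q : EuclideanSpace ℝ (Fin n)} (hp : p ∈ K)
    (hq : q ∈ K) (g : Fin n → ℝ) : ∑ i, g i * (p i - q i) ≤ widthSup K g := by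
  obtain ⟨D, -, hD⟩ := exists_coord_bound hK
  refine le_csSup ⟨D * ∑ i, |g i|, ?_⟩ ⟨(p, q), ⟨hp, hq⟩, rfl⟩
  rintro _ ⟨⟨p, q⟩, ⟨hp, hq⟩, rfl⟩
  exact hD p hp q hq g

lemma widthSup_le (hne : K.Nonempty) {g : Fin n → ℝ} {B : ℝ}
    (h : ∀ p ∈ K, ∀ q ∈ K, ∑ i, g i * (p i - q i) ≤ B) : widthSup K g ≤ B := by
  refine csSup_le ((hne.prod hne).image _) ?_
  rintro _ ⟨⟨p, q⟩, ⟨hp, hq⟩, rfl⟩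
  exact h p hp q hq

lemma widthSup_nonneg (hK : Bornology.IsBounded K) (hne : K.Nonempty) (g : Fin n → ℝ) :
    0 ≤ widthSup K g := by
  obtain ⟨p, hp⟩ := hne
  simpa using le_widthSup hK hp hp g

lemma widthSup_neg_le (hK : Bornology.IsBounded K) (hne : K.Nonempty) (g : Fin n → ℝ) :
    widthSup K (-g) ≤ widthSup K g :=
  widthSup_le hne fun p hp q hq => by
    refine le_of_eq_of_le (Finset.sum_congr rfl fun i _ => ?_) (le_widthSup hK hq hp g)
    rw [Pi.neg_apply]; ring

lemma widthSup_add_le (hK : Bornology.IsBounded K) (hne : K.Nonempty) (a b : Fin n → ℝ) :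
    widthSup K (a + b) ≤ widthSup K a + widthSup K b :=
  widthSup_le hne fun p hp q hq => by
    refine le_of_eq_of_le ?_ (add_le_add (le_widthSup hK hp hq a) (le_widthSup hK hp hq b))
    rw [← Finset.sum_add_distrib]
    exact Finset.sum_congr rfl fun i _ => by rw [Pi.add_apply]; ring

lemma continuous_widthSup (hK : Bornology.IsBounded K) (hne : K.Nonempty) :
    Continuous (widthSup K) := by
  obtain ⟨D, hD0, hD⟩ := exists_coord_bound hK
  refine (LipschitzWith.of_le_add_mul' (D * n) fun a b => ?_).continuous
  have h1 := widthSup_add_le hK hne b (a - b)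
  rw [add_sub_cancel] at h1
  have h2 : widthSup K (a - b) ≤ D * ∑ i, |(a - b) i| :=
    widthSup_le hne fun p hp q hq => hD p hp q hq _
  have h3 : ∑ i, |(a - b) i| ≤ n * dist a b := by
    rw [dist_eq_norm]
    calc ∑ i, |(a - b) i| ≤ ∑ _i : Fin n, ‖a - b‖ :=
          Finset.sum_le_sum fun i _ => norm_le_pi_norm (a - b) i
      _ = _ := by simp
  have h4 := mul_le_mul_of_nonneg_left h3 hD0
  rw [mul_assoc]
  linarith

lemma integrable_widthSup (hK : Bornology.IsBounded K) (hne : K.Nonempty) :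
    Integrable (widthSup K) (gaussPi n) := by
  obtain ⟨D, -, hD⟩ := exists_coord_bound hK
  have hI : Integrable (fun g : Fin n → ℝ => D * ∑ i, |g i|) (gaussPi n) := by
    refine Integrable.const_mul (integrable_finsetSum _ fun i _ => ?_) _
    exact integrable_comp_eval (μ := fun _ : Fin n => gaussianReal 0 1) (f := fun y : ℝ => |y|)
      ((memLp_id_gaussianReal (μ := 0) (v := 1) 1).integrable (by simp)).abs
  refine hI.mono' (continuous_widthSup hK hne).aestronglyMeasurable (ae_of_all _ fun g => ?_)
  rw [Real.norm_of_nonneg (widthSup_nonneg hK hne g)]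
  exact widthSup_le hne fun p hp q hq => hD p hp q hq g

lemma gaussWidth_eq (K : Set (EuclideanSpace ℝ (Fin n))) :
    gaussWidth K = ∫ g, widthSup K g ∂(gaussPi n) := rfl

lemma half_le_measure (hK : Bornology.IsBounded K) (hne : K.Nonempty) {W : ℝ} (hW : 0 < W)
    (hKW : gaussWidth K ≤ W) : 1 / 2 ≤ (gaussPi n).real {g | widthSup K g < 2 * W} := by
  have h1 := mul_meas_ge_le_integral_of_nonneg (ae_of_all _ (widthSup_nonneg hK hne))
    (integrable_widthSup hK hne) (2 * W)
  rw [← gaussWidth_eq] at h1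
  have hm : MeasurableSet {g | 2 * W ≤ widthSup K g} :=
    (isClosed_le continuous_const (continuous_widthSup hK hne)).measurableSet
  have h2 := probReal_compl_eq_one_sub (μ := gaussPi n) hm
  have h3 : {g | 2 * W ≤ widthSup K g}ᶜ = {g | widthSup K g < 2 * W} := by
    ext g; simp
  rw [h3] at h2
  rw [h2]
  have h4 : (gaussPi n).real {g | 2 * W ≤ widthSup K g} ≤ 1 / 2 := by
    by_contra! h
    nlinarith
  linarith

/-! ### Entropy estimates -/

/-- Points `u ∈ U` in a ball of radius `r` with `widthSup K (u - v) ≥ δ` for `u ≠ v`, the latter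
being expressed through witnesses `p, q ∈ K`, are at most `2 exp (8 W² r² / δ²)` in number. -/
lemma card_le_of_sep (hK : Bornology.IsBounded K) (hne : K.Nonempty) {W : ℝ} (hW : 0 < W)
    (hKW : gaussWidth K ≤ W) {δ r : ℝ} (hδ : 0 < δ) (t : EuclideanSpace ℝ (Fin n))
    (U : Finset (EuclideanSpace ℝ (Fin n))) (hball : ∀ u ∈ U, dist u t ≤ r)
    (hsep : ∀ u ∈ U, ∀ v ∈ U, u ≠ v → ∃ p ∈ K, ∃ q ∈ K, δ ≤ ∑ i, (u i - v i) * (p i - q i)) :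
    (U.card : ℝ) ≤ 2 * Real.exp (8 * W ^ 2 * r ^ 2 / δ ^ 2) := by
  set A : Set (Fin n → ℝ) := {g | widthSup K g < 2 * W} with hA
  have hAm : MeasurableSet A :=
    (isOpen_lt (continuous_widthSup hK hne) continuous_const).measurableSet
  have hAs : ∀ g ∈ A, -g ∈ A := fun g hg => (widthSup_neg_le hK hne g).trans_lt hg
  -- The dilation `4 W / δ` makes the translates of `A` disjoint.
  set l : ℝ := 4 * W / δ with hl
  have hl0 : 0 < l := by positivity
  set x : EuclideanSpace ℝ (Fin n) → Fin n → ℝ := fun u i => l * (u i - t i) with hx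
  have hdisj : (U : Set (EuclideanSpace ℝ (Fin n))).PairwiseDisjoint
      (fun u => {g | g - x u ∈ A}) := by
    intro u hu v hv huv
    refine Set.disjoint_left.2 fun g hgu hgv => ?_
    obtain ⟨p, hp, q, hq, hpq⟩ := hsep u hu v hv huv
    have h1 := le_widthSup hK hp hq (x u - x v)
    have h2 : ∑ i, (x u - x v) i * (p i - q i) = l * ∑ i, (u i - v i) * (p i - q i) := by
      rw [Finset.mul_sum]
      refine Finset.sum_congr rfl fun i _ => ?_
      simp only [hx, Pi.sub_apply]; ring
    have h3 : l * δ = 4 * W := by rw [hl]; field_simp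
    have h4 := mul_le_mul_of_nonneg_left hpq hl0.le
    have h5 := widthSup_add_le hK hne (g - x v) (-(g - x u))
    rw [show g - x v + -(g - x u) = x u - x v by abel] at h5
    have h6 : widthSup K (g - x v) < 2 * W := hgv
    have h7 : widthSup K (-(g - x u)) < 2 * W := hAs _ hgu
    linarith
  have hlow : ∀ u ∈ U, Real.exp (-(l ^ 2 * r ^ 2) / 2) * (1 / 2) ≤
      (gaussPi n).real {g | g - x u ∈ A} := by
    intro u hu
    refine le_trans ?_ (gaussPi_shift hAm hAs (x u))
    have hs : ∑ i, x u i ^ 2 ≤ l ^ 2 * r ^ 2 := by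
      have e : ∑ i, x u i ^ 2 = l ^ 2 * dist u t ^ 2 := by
        rw [EuclideanSpace.dist_eq, Real.sq_sqrt (Finset.sum_nonneg fun i _ => sq_nonneg _),
          Finset.mul_sum]
        refine Finset.sum_congr rfl fun i _ => ?_
        rw [Real.dist_eq, sq_abs, hx, mul_pow]
      rw [e]
      have := hball u hu
      gcongr
    have := half_le_measure hK hne hW hKW
    gcongr
  have hsum : (U.card : ℝ) * (Real.exp (-(l ^ 2 * r ^ 2) / 2) * (1 / 2)) ≤ 1 := by
    calc _ = ∑ _u ∈ U, Real.exp (-(l ^ 2 * r ^ 2) / 2) * (1 / 2) := by simp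
      _ ≤ ∑ u ∈ U, (gaussPi n).real {g | g - x u ∈ A} := Finset.sum_le_sum hlow
      _ = (gaussPi n).real (⋃ u ∈ U, {g | g - x u ∈ A}) :=
          (measureReal_biUnion_finset hdisj fun u _ => (measurable_sub_const _) hAm).symm
      _ ≤ 1 := measureReal_le_one
  have he : Real.exp (-(l ^ 2 * r ^ 2) / 2) * Real.exp (8 * W ^ 2 * r ^ 2 / δ ^ 2) = 1 := by
    rw [← Real.exp_add, Real.exp_eq_one_iff, hl]
    field_simp
    ring
  calc (U.card : ℝ) = 2 * ((U.card : ℝ) * (Real.exp (-(l ^ 2 * r ^ 2) / 2) * (1 / 2))) *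
        Real.exp (8 * W ^ 2 * r ^ 2 / δ ^ 2) := by linear_combination (-(U.card : ℝ)) * he
    _ ≤ 2 * 1 * Real.exp (8 * W ^ 2 * r ^ 2 / δ ^ 2) := by gcongr
    _ = _ := by ring

lemma dist_sq_eq_sum (u v : EuclideanSpace ℝ (Fin n)) :
    dist u v ^ 2 = ∑ i, (u i - v i) * (u i - v i) := by
  rw [EuclideanSpace.dist_eq, Real.sq_sqrt (Finset.sum_nonneg fun i _ => sq_nonneg _)]
  exact Finset.sum_congr rfl fun i _ => by rw [Real.dist_eq, sq_abs, sq]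

/-- The diameter of `K` is at most `√24 W`. -/
lemma dist_sq_le (hK : Bornology.IsBounded K) {W : ℝ} (hW : 0 < W)
    (hKW : gaussWidth K ≤ W) {u v : EuclideanSpace ℝ (Fin n)} (hu : u ∈ K) (hv : v ∈ K) :
    dist u v ^ 2 ≤ 24 * W ^ 2 := by
  classical
  rcases eq_or_ne u v with rfl | huv
  · rw [dist_self]; nlinarith [sq_nonneg W]
  set d := dist u v with hd
  have hd0 : 0 < d := dist_pos.2 huv
  set z := u - v with hz
  have hzd : ‖z‖ = d := (dist_eq_norm u v).symm
  have hz0 : z ≠ 0 := sub_ne_zero.2 huv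
  have hzz : ∑ i, z i * (u i - v i) = d ^ 2 := by rw [dist_sq_eq_sum]; simp [hz]
  have hzz' : ∑ i, z i * (v i - u i) = -d ^ 2 := by
    rw [← hzz, ← Finset.sum_neg_distrib]
    exact Finset.sum_congr rfl fun i _ => by ring
  -- The three multiples are `-z, 0, z`.
  have hinj : Function.Injective (fun c : ℤ => (c : ℝ) • z) := fun a b hab => by
    exact_mod_cast smul_left_injective ℝ hz0 hab
  have h3 := card_le_of_sep hK ⟨u, hu⟩ hW hKW (δ := d ^ 2) (r := d) (by positivity) 0
    ((Finset.Icc (-1 : ℤ) 1).image fun c : ℤ => (c : ℝ) • z) ?_ ?_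
  · rw [Finset.card_image_of_injective _ hinj] at h3
    have h4 : (3 / 2 : ℝ) ≤ Real.exp (8 * W ^ 2 * d ^ 2 / (d ^ 2) ^ 2) := by
      rw [show (Finset.Icc (-1 : ℤ) 1).card = 3 from rfl] at h3
      push_cast at h3
      linarith
    have h5 := Real.log_le_log (by norm_num) h4
    rw [Real.log_exp] at h5
    have h6 := Real.one_sub_inv_le_log_of_pos (show (0 : ℝ) < 3 / 2 by norm_num)
    have h7 : (1 / 3 : ℝ) ≤ 8 * W ^ 2 / d ^ 2 := by
      have : 8 * W ^ 2 * d ^ 2 / (d ^ 2) ^ 2 = 8 * W ^ 2 / d ^ 2 := by field_simp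
      rw [← this]
      norm_num at h6
      linarith
    rw [le_div_iff₀ (by positivity)] at h7
    linarith
  · intro y hy
    obtain ⟨c, hc, rfl⟩ := Finset.mem_image.1 hy
    rw [Finset.mem_Icc] at hc
    have : |(c : ℝ)| ≤ 1 := by exact_mod_cast abs_le.2 hc
    rw [dist_zero_right, norm_smul, hzd, Real.norm_eq_abs]
    nlinarith
  · intro y hy y' hy' hne
    obtain ⟨c, -, rfl⟩ := Finset.mem_image.1 hy
    obtain ⟨c', -, rfl⟩ := Finset.mem_image.1 hy'
    have hcc : c ≠ c' := fun h => hne (by rw [h])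
    have hexp : ∀ p q : EuclideanSpace ℝ (Fin n),
        ∑ i, (((c : ℝ) • z) i - ((c' : ℝ) • z) i) * (p i - q i) =
          ((c : ℝ) - c') * ∑ i, z i * (p i - q i) := by
      intro p q
      rw [Finset.mul_sum]
      refine Finset.sum_congr rfl fun i _ => ?_
      simp only [PiLp.smul_apply, smul_eq_mul]; ring
    rcases lt_or_gt_of_ne hcc with h | h
    · refine ⟨v, hv, u, hu, ?_⟩
      have : (c : ℝ) + 1 ≤ c' := by exact_mod_cast h
      rw [hexp, hzz']
      nlinarith [sq_nonneg d]
    · refine ⟨u, hu, v, hv, ?_⟩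
      have : (c' : ℝ) + 1 ≤ c := by exact_mod_cast h
      rw [hexp, hzz]
      nlinarith [sq_nonneg d]

/-- A maximal `η`-separated subset of a finite set is an `η`-net. -/
lemma exists_maximal_separated {X : Type*} [MetricSpace X] (S : Finset X) {η : ℝ} (hη : 0 < η) :
    ∃ T ⊆ S, (∀ u ∈ T, ∀ v ∈ T, u ≠ v → η ≤ dist u v) ∧ ∀ s ∈ S, ∃ t ∈ T, dist s t < η := by
  classical
  obtain ⟨T, hT⟩ := (S.powerset.filter
    fun T => ∀ u ∈ T, ∀ v ∈ T, u ≠ v → η ≤ dist u v).exists_maximal ⟨∅, by simp⟩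
  have hTm := hT.1
  beta_reduce at hTm
  rw [Finset.mem_filter, Finset.mem_powerset] at hTm
  refine ⟨T, hTm.1, hTm.2, fun s hs => ?_⟩
  by_contra! hfar
  have hsT : s ∉ T := fun h => by
    have := hfar s h
    rw [dist_self] at this
    linarith
  refine hT.not_gt ?_ (Finset.ssubset_insert hsT)
  rw [Finset.mem_filter, Finset.mem_powerset]
  refine ⟨Finset.insert_subset hs hTm.1, fun u hu v hv huv => ?_⟩
  rcases Finset.mem_insert.1 hu with rfl | huT <;>
    rcases Finset.mem_insert.1 hv with rfl | hvT
  · exact absurd rfl huv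
  · exact hfar v hvT
  · rw [dist_comm]; exact hfar u huT
  · exact hTm.2 u huT v hvT huv

/-- Passing from scale `2 ε` to scale `ε` costs a factor `2 exp (32 W² / ε²)`. -/
lemma card_le_card_coarse (hK : Bornology.IsBounded K) {W : ℝ} (hW : 0 < W)
    (hKW : gaussWidth K ≤ W) {ε : ℝ} (hε : 0 < ε) (S T : Finset (EuclideanSpace ℝ (Fin n)))
    (hSK : ↑S ⊆ K) (hS : ∀ u ∈ S, ∀ v ∈ S, u ≠ v → ε ≤ dist u v)
    (hcov : ∀ s ∈ S, ∃ t ∈ T, dist s t < 2 * ε) :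
    (S.card : ℝ) ≤ T.card * (2 * Real.exp (32 * W ^ 2 / ε ^ 2)) := by
  classical
  rcases S.eq_empty_or_nonempty with rfl | ⟨s₀, hs₀⟩
  · simp only [Finset.card_empty, Nat.cast_zero]; positivity
  choose! f hfT hfd using hcov
  rw [Finset.card_eq_sum_card_fiberwise hfT, Nat.cast_sum, ← nsmul_eq_mul]
  refine Finset.sum_le_card_nsmul _ _ _ fun t _ => ?_
  have h := card_le_of_sep hK ⟨s₀, hSK hs₀⟩ hW hKW (δ := ε ^ 2) (r := 2 * ε) (by positivity) t
    {s ∈ S | f s = t} ?_ ?_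
  · have e : 8 * W ^ 2 * (2 * ε) ^ 2 / (ε ^ 2) ^ 2 = 32 * W ^ 2 / ε ^ 2 := by
      field_simp
      norm_num
    rwa [e] at h
  · intro u hu
    obtain ⟨huS, rfl⟩ := Finset.mem_filter.1 hu
    exact (hfd u huS).le
  · intro u hu v hv huv
    have hu := (Finset.mem_filter.1 hu).1
    have hv := (Finset.mem_filter.1 hv).1
    refine ⟨u, hSK hu, v, hSK hv, ?_⟩
    rw [← dist_sq_eq_sum]
    have := hS u hu v hv huv
    gcongr

/-- Induction on the number `k` of dyadic scales between `ε` and the diameter of `K`. -/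
lemma log_card_le (hK : Bornology.IsBounded K) {W : ℝ} (hW : 0 < W)
    (hKW : gaussWidth K ≤ W) (k : ℕ) : ∀ ε : ℝ, 0 < ε →
      (∀ u ∈ K, ∀ v ∈ K, dist u v < 2 ^ k * ε) →
      ∀ S : Finset (EuclideanSpace ℝ (Fin n)), ↑S ⊆ K →
      (∀ u ∈ S, ∀ v ∈ S, u ≠ v → ε ≤ dist u v) →
      Real.log S.card ≤ 81 * (W ^ 2 / ε ^ 2) := by
  have triv : ∀ (ε : ℝ) (S : Finset (EuclideanSpace ℝ (Fin n))), S.card ≤ 1 →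
      Real.log S.card ≤ 81 * (W ^ 2 / ε ^ 2) := by
    intro ε S h
    refine (Real.log_nonpos (Nat.cast_nonneg _) (by exact_mod_cast h)).trans (by positivity)
  induction k with
  | zero =>
    intro ε hε hdiam S hSK hS
    refine triv ε S (Finset.card_le_one.2 fun u hu v hv => ?_)
    by_contra huv
    have := hdiam u (hSK hu) v (hSK hv)
    rw [pow_zero, one_mul] at this
    linarith [hS u hu v hv huv]
  | succ k ih =>
    intro ε hε hdiam S hSK hS
    rcases Nat.lt_or_ge 1 S.card with hcard | hcard
    swap
    · exact triv ε S hcard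
    obtain ⟨T, hTS, hT, hcov⟩ := exists_maximal_separated S (η := 2 * ε) (by positivity)
    have hTlog := ih (2 * ε) (by positivity)
      (fun u hu v hv => by have := hdiam u hu v hv; rw [pow_succ] at this; linarith)
      T (fun t ht => hSK (hTS ht)) hT
    have hST := card_le_card_coarse hK hW hKW hε S T hSK hS hcov
    obtain ⟨u, hu, v, hv, huv⟩ := Finset.one_lt_card.1 hcard
    obtain ⟨t, ht, -⟩ := hcov u hu
    have hTpos : (0 : ℝ) < T.card := by exact_mod_cast Finset.card_pos.2 ⟨t, ht⟩
    have hSpos : (0 : ℝ) < S.card := by exact_mod_cast (zero_lt_one.trans hcard)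
    have hlog := Real.log_le_log hSpos hST
    rw [Real.log_mul hTpos.ne' (by positivity), Real.log_mul (by norm_num) (by positivity),
      Real.log_exp] at hlog
    -- Two distinct points at distance at least `ε` absorb `log 2` into `W² / ε²`.
    have hW1 : 1 ≤ 24 * (W ^ 2 / ε ^ 2) := by
      rw [← mul_div_assoc, one_le_div (by positivity)]
      have h1 := hS u hu v hv huv
      have h2 := dist_sq_le hK hW hKW (hSK hu) (hSK hv)
      exact le_trans (by gcongr) h2
    have hlog2 : Real.log 2 ≤ 1 := by linarith [Real.log_le_sub_one_of_pos (zero_lt_two (α := ℝ))]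
    have e1 : W ^ 2 / (2 * ε) ^ 2 = (W ^ 2 / ε ^ 2) / 4 := by field_simp; norm_num
    have e2 : 32 * W ^ 2 / ε ^ 2 = 32 * (W ^ 2 / ε ^ 2) := by ring
    have : 0 ≤ W ^ 2 / ε ^ 2 := by positivity
    rw [e1] at hTlog
    rw [e2] at hlog
    linarith

end widthSup

/-- **Sudakov minoration**: if `S ⊆ K` is `ε`-separated, then
`ε √(log |S|) ≤ C ω(K)`; equivalently `log |S| ≤ C² ω(K)² / ε²`. -/
theorem sudakov_minoration :
    ∃ C > (0 : ℝ), ∀ (n : ℕ) (K : Set (EuclideanSpace ℝ (Fin n))),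
      Bornology.IsBounded K → ∀ ε > (0 : ℝ),
      ∀ S : Finset (EuclideanSpace ℝ (Fin n)), ↑S ⊆ K →
        (∀ u ∈ S, ∀ v ∈ S, u ≠ v → ε ≤ dist u v) →
        ε * Real.sqrt (Real.log S.card) ≤ C * gaussWidth K ∧
        Real.log S.card ≤ C ^ 2 * gaussWidth K ^ 2 / ε ^ 2 := by
  refine ⟨9, by norm_num, fun n K hK ε hε S hSK hS => ?_⟩
  have hlog0 : 0 ≤ Real.log S.card := Real.log_natCast_nonneg _
  have hw0 : 0 ≤ gaussWidth K := by
    rw [gaussWidth_eq]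
    refine integral_nonneg fun g => ?_
    rcases K.eq_empty_or_nonempty with rfl | hne
    · simp [widthSup]
    · exact widthSup_nonneg hK hne g
  obtain ⟨D, hD⟩ := Metric.isBounded_iff.1 hK
  obtain ⟨k, hk⟩ := pow_unbounded_of_one_lt (D / ε) (one_lt_two (α := ℝ))
  rw [div_lt_iff₀ hε] at hk
  -- The entropy bound needs a positive `W`, so it is applied to `W = ω(K) + η` with `η → 0`.
  have hmain : ε * √(Real.log S.card) ≤ 9 * gaussWidth K := by
    refine le_of_forall_pos_le_add fun η hη => ?_
    have hW : 0 < gaussWidth K + η / 9 := by positivity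
    have h := log_card_le hK hW (by linarith) k ε hε
      (fun u hu v hv => (hD hu hv).trans_lt hk) S hSK hS
    have h2 : √(Real.log S.card) ≤ 9 * (gaussWidth K + η / 9) / ε :=
      Real.sqrt_le_iff.2 ⟨by positivity, h.trans_eq (by ring)⟩
    rw [le_div_iff₀ hε] at h2
    linarith
  refine ⟨hmain, ?_⟩
  rw [le_div_iff₀ (by positivity)]
  have h := pow_le_pow_left₀ (by positivity) hmain 2
  rw [mul_pow, Real.sq_sqrt hlog0, mul_pow] at h
  linarith
end

section
/- (Grothendieck identity / random hyperplane probability.) Let x, y be unit vectors in ℝⁿ and let g be a standard Gaussian random vector in ℝⁿ (i.i.d. N(0,1) coordinates). Then the probability that ⟨g, x⟩ and ⟨g, y⟩ have opposite signs equals the normalized angle between x and y: P(sign⟨g, x⟩ ≠ sign⟨g, y⟩) = arccos⟨x, y⟩ / π. -/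
open MeasureTheory ProbabilityTheory

/-!
The joint law of `(⟨g, x⟩, ⟨g, y⟩)` depends only on the Gram matrix of `x` and `y`
(`map_pi_gaussian_eq`), so with `θ = arccos ⟨x, y⟩` the vectors may be replaced by the plane unit
vectors at angles `θ/2` and `-θ/2`. The event of different signs is then a cone in the plane. The
standard Gaussian measure of the plane is rotation invariant, so the mass of a cone is the length
of its set of directions divided by `2π` (`planeGaussian_cone`). For the direction `t`, the product
of the two inner products is `cos (t - θ/2) cos (t + θ/2) = (cos θ + cos 2t) / 2`, which is negative
exactly when `|t|` is within `θ/2` of `π/2`: two arcs of total length `2θ`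
(`volume_separating_angles`). The symmetric choice `±θ/2` keeps both arcs inside `[-π, π]`, and the
convention `sign 0 = 0` affects only their endpoints.
-/

/-- The standard Gaussian measure on the plane. -/
noncomputable abbrev planeGaussian : Measure (ℝ × ℝ) :=
  (gaussianReal 0 1).prod (gaussianReal 0 1)

lemma charFunDual_stdGaussianReal (L : StrongDual ℝ ℝ) :
    charFunDual (gaussianReal 0 1) L = Complex.exp (((-(L 1) ^ 2 / 2 : ℝ)) : ℂ) := by
  have h : (gaussianReal 0 1).map L = gaussianReal 0 (.mk ((L 1) ^ 2) (sq_nonneg _)) := by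
    have h1 : (L : ℝ → ℝ) = fun t => L 1 * t := by
      funext t
      have := L.map_smul t 1
      simp only [smul_eq_mul, mul_one] at this
      rw [this, mul_comm]
    rw [h1, gaussianReal_map_const_mul]
    simp
  rw [charFunDual_eq_charFun_map_one, h, charFun_gaussianReal]
  congr 1
  push_cast
  simp
  ring

/-- Two linear functionals of a standard Gaussian vector of `ℝⁿ` have the same joint law as two
linear functionals of a standard Gaussian vector of the plane with the same Gram matrix: both laws
are centred Gaussian, so their characteristic functions agree. -/
lemma map_pi_gaussian_eq {n : ℕ} (x y : Fin n → ℝ) (a b c d : ℝ)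
    (hxx : ∑ i, x i * x i = a * a + b * b) (hyy : ∑ i, y i * y i = c * c + d * d)
    (hxy : ∑ i, x i * y i = a * c + b * d) :
    (Measure.pi fun _ : Fin n => gaussianReal 0 1).map
        (fun g => (∑ i, g i * x i, ∑ i, g i * y i)) =
      planeGaussian.map (fun p => (p.1 * a + p.2 * b, p.1 * c + p.2 * d)) := by
  let S : (Fin n → ℝ) →L[ℝ] ℝ × ℝ :=
    (∑ i, x i • ContinuousLinearMap.proj (R := ℝ) (φ := fun _ : Fin n => ℝ) i).prod
      (∑ i, y i • ContinuousLinearMap.proj (R := ℝ) (φ := fun _ : Fin n => ℝ) i)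
  let T : (ℝ × ℝ) →L[ℝ] ℝ × ℝ :=
    (a • ContinuousLinearMap.fst ℝ ℝ ℝ + b • ContinuousLinearMap.snd ℝ ℝ ℝ).prod
      (c • ContinuousLinearMap.fst ℝ ℝ ℝ + d • ContinuousLinearMap.snd ℝ ℝ ℝ)
  have hS : (fun g : Fin n → ℝ => (∑ i, g i * x i, ∑ i, g i * y i)) = S := by
    funext g
    simp [S, mul_comm]
  have hT : (fun p : ℝ × ℝ => (p.1 * a + p.2 * b, p.1 * c + p.2 * d)) = T := by
    funext p
    simp [T, mul_comm]
  have : IsFiniteMeasure ((Measure.pi fun _ : Fin n => gaussianReal 0 1).map S) :=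
    Measure.isFiniteMeasure_map _ _
  have : IsFiniteMeasure (planeGaussian.map T) := Measure.isFiniteMeasure_map _ _
  rw [hS, hT]
  apply Measure.ext_of_charFunDual
  ext L
  have hL : ∀ u v : ℝ, L (u, v) = u * L (1, 0) + v * L (0, 1) := by
    intro u v
    have : (u, v) = u • ((1, 0) : ℝ × ℝ) + v • ((0, 1) : ℝ × ℝ) := by simp
    rw [this, map_add, map_smul, map_smul, smul_eq_mul, smul_eq_mul]
  rw [charFunDual_map, charFunDual_map, charFunDual_pi, charFunDual_prod]
  simp_rw [charFunDual_stdGaussianReal]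
  rw [← Complex.exp_sum, ← Complex.exp_add, ← Complex.ofReal_sum, ← Complex.ofReal_add]
  congr 2
  have e1 : ∀ i, (((L.comp S).comp (ContinuousLinearMap.single ℝ (fun _ => ℝ) i)) 1) =
      x i * L (1, 0) + y i * L (0, 1) := by
    intro i
    have : S (Pi.single i 1) = (x i, y i) := by
      rw [← hS]; simp [Pi.single_apply]
    rw [← hL, ← this]; rfl
  have e2 : ((L.comp T).comp (.inl ℝ ℝ ℝ)) 1 = a * L (1, 0) + c * L (0, 1) := by
    have : T (1, 0) = (a, c) := by rw [← hT]; simp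
    rw [← hL, ← this]; rfl
  have e3 : ((L.comp T).comp (.inr ℝ ℝ ℝ)) 1 = b * L (1, 0) + d * L (0, 1) := by
    have : T (0, 1) = (b, d) := by rw [← hT]; simp
    rw [← hL, ← this]; rfl
  simp_rw [e1]
  rw [e2, e3]
  have e4 : ∀ i, -(x i * L (1, 0) + y i * L (0, 1)) ^ 2 / 2 =
      (x i * x i) * (-(L (1, 0)) ^ 2 / 2) + (y i * y i) * (-(L (0, 1)) ^ 2 / 2) +
        (x i * y i) * (-(L (1, 0) * L (0, 1))) := fun i => by ring
  simp_rw [e4]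
  rw [Finset.sum_add_distrib, Finset.sum_add_distrib, ← Finset.sum_mul, ← Finset.sum_mul,
    ← Finset.sum_mul, hxx, hyy, hxy]
  ring

/-- In polar coordinates the Gaussian density splits off its radial part. The angular constant
`A` is the radial integral, which is the same for all cones. -/
lemma planeGaussian_cone_aux : ∃ A : ENNReal, ∀ S : Set (ℝ × ℝ), MeasurableSet S →
    (∀ r : ℝ, 0 < r → ∀ p, r • p ∈ S ↔ p ∈ S) →
    planeGaussian S =
      A * volume ({t : ℝ | (Real.cos t, Real.sin t) ∈ S} ∩ Set.Ioo (-Real.pi) Real.pi) := by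
  let D : ℝ × ℝ → ENNReal := fun p => gaussianPDF 0 1 p.1 * gaussianPDF 0 1 p.2
  let K : ℝ → ENNReal := fun r => ENNReal.ofReal r * D (r, 0)
  have hK : Measurable K := by
    have : Measurable (fun r : ℝ => gaussianPDF 0 1 r) := measurable_gaussianPDF 0 1
    fun_prop
  have hD : ∀ r t : ℝ, D (r * Real.cos t, r * Real.sin t) = D (r, 0) := by
    intro r t
    simp only [D, gaussianPDF]
    rw [← ENNReal.ofReal_mul (gaussianPDFReal_nonneg _ _ _),
      ← ENNReal.ofReal_mul (gaussianPDFReal_nonneg _ _ _)]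
    congr 1
    simp only [gaussianPDFReal]
    have hm : ∀ c u v : ℝ, c * Real.exp u * (c * Real.exp v) = c * c * Real.exp (u + v) :=
      fun c u v => by rw [mul_mul_mul_comm, Real.exp_add]
    rw [hm, hm]
    congr 2
    have := Real.sin_sq_add_cos_sq t
    simp
    linear_combination (-r ^ 2 / 2) * this
  refine ⟨∫⁻ r in Set.Ioi (0 : ℝ), K r, fun S hS hcone => ?_⟩
  have hT : MeasurableSet {t : ℝ | (Real.cos t, Real.sin t) ∈ S} :=
    (show Measurable fun t : ℝ => (Real.cos t, Real.sin t) by fun_prop) hS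
  have hG : gaussianReal 0 1 = volume.withDensity (gaussianPDF 0 1) :=
    gaussianReal_of_var_ne_zero 0 one_ne_zero
  rw [planeGaussian, hG, prod_withDensity (measurable_gaussianPDF 0 1) (measurable_gaussianPDF 0 1),
    withDensity_apply _ hS, ← Measure.volume_eq_prod, ← lintegral_indicator hS,
    ← lintegral_comp_polarCoord_symm]
  have hpt : ∀ p ∈ polarCoord.target, ENNReal.ofReal p.1 • S.indicator D (polarCoord.symm p) =
      K p.1 * {t : ℝ | (Real.cos t, Real.sin t) ∈ S}.indicator 1 p.2 := by
    rintro ⟨r, t⟩ ⟨hr, -⟩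
    have h := hcone r hr (Real.cos t, Real.sin t)
    simp only [Prod.smul_mk, smul_eq_mul] at h
    by_cases ht : (Real.cos t, Real.sin t) ∈ S
    · simp [polarCoord_symm_apply, Set.indicator, h, ht, hD, K]
    · simp [polarCoord_symm_apply, Set.indicator, h, ht]
  rw [setLIntegral_congr_fun polarCoord.open_target.measurableSet hpt, polarCoord_target,
    Measure.volume_eq_prod, ← Measure.prod_restrict,
    lintegral_prod_mul hK.aemeasurable (measurable_one.indicator hT).aemeasurable,
    lintegral_indicator_one hT, Measure.restrict_apply hT]

/-- The Gaussian mass of a plane cone is the proportion of directions it contains. -/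
lemma planeGaussian_cone (S : Set (ℝ × ℝ)) (hS : MeasurableSet S)
    (hcone : ∀ r : ℝ, 0 < r → ∀ p, r • p ∈ S ↔ p ∈ S) :
    planeGaussian S =
      volume ({t : ℝ | (Real.cos t, Real.sin t) ∈ S} ∩ Set.Ioo (-Real.pi) Real.pi) /
        ENNReal.ofReal (2 * Real.pi) := by
  obtain ⟨A, hA⟩ := planeGaussian_cone_aux
  -- The whole plane is a cone of mass one, which determines the constant.
  have h1 := hA Set.univ MeasurableSet.univ (by simp)
  rw [measure_univ] at h1
  simp only [Set.mem_univ, Set.ofPred_true, Set.univ_inter, Real.volume_Ioo] at h1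
  rw [show Real.pi - -Real.pi = 2 * Real.pi by ring] at h1
  rw [hA S hS hcone, ENNReal.eq_inv_of_mul_eq_one_left h1.symm, mul_comm, ENNReal.div_eq_inv_mul,
    mul_comm]

lemma sign_eq_sign_of_mul_pos {u v : ℝ} (h : 0 < u * v) : Real.sign u = Real.sign v := by
  rcases mul_pos_iff.1 h with ⟨hu, hv⟩ | ⟨hu, hv⟩
  · rw [Real.sign_of_pos hu, Real.sign_of_pos hv]
  · rw [Real.sign_of_neg hu, Real.sign_of_neg hv]

lemma sign_ne_sign_of_mul_neg {u v : ℝ} (h : u * v < 0) : Real.sign u ≠ Real.sign v := by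
  rcases mul_neg_iff.1 h with ⟨hu, hv⟩ | ⟨hu, hv⟩
  · rw [Real.sign_of_pos hu, Real.sign_of_neg hv]; norm_num
  · rw [Real.sign_of_neg hu, Real.sign_of_pos hv]; norm_num

lemma measurable_real_sign : Measurable Real.sign := by
  unfold Real.sign
  exact Measurable.ite measurableSet_Iio measurable_const
    (Measurable.ite measurableSet_Ioi measurable_const measurable_const)

lemma real_sign_mul_of_pos {r : ℝ} (hr : 0 < r) (u : ℝ) : Real.sign (r * u) = Real.sign u := by
  rcases lt_trichotomy u 0 with hu | rfl | hu
  · rw [Real.sign_of_neg hu, Real.sign_of_neg (mul_neg_of_pos_of_neg hr hu)]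
  · simp
  · rw [Real.sign_of_pos hu, Real.sign_of_pos (mul_pos hr hu)]

/-- `cos (t - θ/2) * cos (t + θ/2)`, written in terms of the distance of `|t|` to `π/2`. -/
lemma cos_mul_cos_eq (t θ : ℝ) :
    (Real.cos t * Real.cos (θ / 2) + Real.sin t * Real.sin (θ / 2)) *
      (Real.cos t * Real.cos (θ / 2) + Real.sin t * -Real.sin (θ / 2)) =
      (Real.cos θ - Real.cos |2 * |t| - Real.pi|) / 2 := by
  have h1 : Real.cos |2 * |t| - Real.pi| = - Real.cos (2 * t) := by
    rw [Real.cos_abs, Real.cos_sub_pi]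
    rcases abs_cases t with ⟨h, -⟩ | ⟨h, -⟩ <;> simp [h]
  have h2 : Real.cos θ = 2 * Real.cos (θ / 2) ^ 2 - 1 := by
    rw [← Real.cos_two_mul]; ring_nf
  rw [h1, h2, Real.cos_two_mul]
  have h3 := Real.sin_sq_add_cos_sq t
  have h4 := Real.sin_sq_add_cos_sq (θ / 2)
  linear_combination (-Real.sin (θ / 2) ^ 2) * h3 + (Real.cos t ^ 2 - 1) * h4

/-- The directions separated by the two lines at angles `±θ/2` form, up to endpoints, two arcs of
length `θ` centred at `±π/2`. -/
lemma volume_separating_angles (θ : ℝ) (h0 : 0 ≤ θ) (hpi : θ ≤ Real.pi) :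
    volume ({t : ℝ | Real.sign (Real.cos t * Real.cos (θ / 2) + Real.sin t * Real.sin (θ / 2)) ≠
      Real.sign (Real.cos t * Real.cos (θ / 2) + Real.sin t * -Real.sin (θ / 2))} ∩
        Set.Ioo (-Real.pi) Real.pi) = ENNReal.ofReal (2 * θ) := by
  have hp := Real.pi_pos
  have hlen : ENNReal.ofReal (2 * θ) = ENNReal.ofReal θ + ENNReal.ofReal θ := by
    rw [← ENNReal.ofReal_add h0 h0, two_mul]
  have hmem : ∀ t ∈ Set.Ioo (-Real.pi) Real.pi, |2 * |t| - Real.pi| ∈ Set.Icc 0 Real.pi := by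
    intro t ht
    have : |t| < Real.pi := abs_lt.2 ht
    exact ⟨abs_nonneg _, abs_le.2 ⟨by linarith [abs_nonneg t], by linarith⟩⟩
  apply le_antisymm
  · calc _ ≤ volume (Set.Icc ((Real.pi - θ) / 2) ((Real.pi + θ) / 2) ∪
          Set.Icc (-((Real.pi + θ) / 2)) (-((Real.pi - θ) / 2))) := by
          apply measure_mono
          rintro t ⟨hs, ht⟩
          have h := not_lt.1 (mt sign_eq_sign_of_mul_pos hs)
          rw [cos_mul_cos_eq] at h
          have h' : |2 * |t| - Real.pi| ≤ θ := by
            rw [← Real.strictAntiOn_cos.le_iff_ge ⟨h0, hpi⟩ (hmem t ht)]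
            linarith
          rw [abs_le] at h'
          rcases abs_cases t with ⟨h, -⟩ | ⟨h, -⟩ <;> rw [h] at h'
          · left; constructor <;> linarith
          · right; constructor <;> linarith
      _ ≤ _ := measure_union_le _ _
      _ = _ := by
          rw [Real.volume_Icc, Real.volume_Icc, hlen]
          ring_nf
  · calc _ = volume (Set.Ioo ((Real.pi - θ) / 2) ((Real.pi + θ) / 2) ∪
          Set.Ioo (-((Real.pi + θ) / 2)) (-((Real.pi - θ) / 2))) := by
          rw [measure_union _ measurableSet_Ioo, Real.volume_Ioo, Real.volume_Ioo, hlen]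
          · ring_nf
          · rw [Set.disjoint_left]
            rintro t ⟨h1, -⟩ ⟨-, h2⟩
            linarith
      _ ≤ _ := by
          apply measure_mono
          intro t ht
          have h1 : t ∈ Set.Ioo (-Real.pi) Real.pi := by
            rcases ht with ⟨h1, h2⟩ | ⟨h1, h2⟩ <;> constructor <;> linarith
          refine ⟨sign_ne_sign_of_mul_neg ?_, h1⟩
          have h' : |2 * |t| - Real.pi| < θ := by
            rw [abs_lt]
            rcases ht with ⟨h1, h2⟩ | ⟨h1, h2⟩
            · rw [abs_of_pos (by linarith)]; constructor <;> linarith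
            · rw [abs_of_neg (by linarith)]; constructor <;> linarith
          rw [← Real.strictAntiOn_cos.lt_iff_gt ⟨h0, hpi⟩ (hmem t h1)] at h'
          rw [cos_mul_cos_eq]
          linarith

/-- **Grothendieck identity / random hyperplane probability**: for unit vectors
`x, y ∈ ℝⁿ` and a standard Gaussian vector `g`, the probability that `⟨g, x⟩` and
`⟨g, y⟩` have different signs equals `arccos ⟨x, y⟩ / π`. -/
theorem grothendieck_identity (n : ℕ) (x y : EuclideanSpace ℝ (Fin n))
    (hx : ‖x‖ = 1) (hy : ‖y‖ = 1) :
    (Measure.pi fun _ : Fin n => gaussianReal 0 1)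
      {g | Real.sign (∑ i, g i * x i) ≠ Real.sign (∑ i, g i * y i)} =
    ENNReal.ofReal (Real.arccos (∑ i, x i * y i) / Real.pi) := by
  have hin : ∀ u v : EuclideanSpace ℝ (Fin n), ∑ i, u i * v i = inner ℝ u v := by
    intro u v
    simp [PiLp.inner_apply, mul_comm]
  set θ := Real.arccos (∑ i, x i * y i) with hθ
  have hcos : Real.cos θ = ∑ i, x i * y i := by
    have h := abs_real_inner_le_norm x y
    rw [hx, hy, mul_one, ← hin, abs_le] at h
    exact Real.cos_arccos h.1 h.2
  have h4 := Real.sin_sq_add_cos_sq (θ / 2)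
  have hmap := map_pi_gaussian_eq x y (Real.cos (θ / 2)) (Real.sin (θ / 2))
    (Real.cos (θ / 2)) (-Real.sin (θ / 2))
    (by rw [hin, real_inner_self_eq_norm_sq, hx]; linarith)
    (by rw [hin, real_inner_self_eq_norm_sq, hy]; linarith)
    (by
      rw [← hcos, show θ = 2 * (θ / 2) by ring, Real.cos_two_mul]
      ring_nf at h4 ⊢
      linarith)
  let W : Set (ℝ × ℝ) := {q | Real.sign q.1 ≠ Real.sign q.2}
  have hW : MeasurableSet W :=
    (measurableSet_eq_fun (measurable_real_sign.comp measurable_fst)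
      (measurable_real_sign.comp measurable_snd)).compl
  have hf : Measurable (fun p : ℝ × ℝ => (p.1 * Real.cos (θ / 2) + p.2 * Real.sin (θ / 2),
      p.1 * Real.cos (θ / 2) + p.2 * -Real.sin (θ / 2))) := by fun_prop
  have key := congrArg (fun μ => μ W) hmap
  simp only at key
  rw [Measure.map_apply (by fun_prop) hW, Measure.map_apply hf hW,
    planeGaussian_cone _ (hf hW) ?_] at key
  · refine key.trans ?_
    have hv := volume_separating_angles θ (Real.arccos_nonneg _) (Real.arccos_le_pi _)
    refine (congrArg (· / ENNReal.ofReal (2 * Real.pi)) hv).trans ?_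
    rw [← ENNReal.ofReal_div_of_pos (by positivity), mul_div_mul_left _ _ two_ne_zero]
  · rintro r hr ⟨u, v⟩
    simp only [W, Set.mem_preimage, Set.mem_ofPred_eq, Prod.smul_mk, smul_eq_mul, mul_assoc,
      ← mul_add, real_sign_mul_of_pos hr]
end
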